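/- (Strict positivity of the acyclicity penalty on cyclic graphs.) Let d : ℕ and let A : Matrix (Fin d) (Fin d) ℝ be a binary adjacency matrix. If A is not acyclic (i.e., the directed graph induced by A contains a directed cycle), then trace(Matrix.exp A) > d, i.e., h(A) > 0. -/

import Mathlib

/-- A binary adjacency matrix: every entry is 0 or 1. -/
def IsBinary {d : ℕ} (A : Matrix (Fin d) (Fin d) ℝ) : Prop :=
  ∀ i j, A i j = 0 ∨ A i j = 1

/-- The directed graph induced by `A` (edge `i → j` iff `A i j = 1`) is acyclic. -/
def IsAcyclicMat {d : ℕ} (A : Matrix (Fin d) (Fin d) ℝ) : Prop :=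
  Irreflexive (Relation.TransGen (fun i j => A i j = 1))

/-- The smooth acyclicity function `h(A) = trace (exp A) - d`. -/
noncomputable def hAcyc {d : ℕ} (A : Matrix (Fin d) (Fin d) ℝ) : ℝ :=
  Matrix.trace (NormedSpace.exp A) - d

open Classical in
/-- The penalized objective `F(A) = S(A) + λ₁·1[A ∉ DAGs] + λ₂·h(A)`. -/
noncomputable def penObj {d : ℕ} (S : Matrix (Fin d) (Fin d) ℝ → ℝ) (lam1 lam2 : ℝ)
    (A : Matrix (Fin d) (Fin d) ℝ) : ℝ :=
  S A + lam1 * (if IsAcyclicMat A then (0 : ℝ) else 1) + lam2 * hAcyc A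

section
attribute [local instance] Matrix.linftyOpNormedRing Matrix.linftyOpNormedAlgebra

theorem hasSum_exp_mat_aux {d : ℕ} (A : Matrix (Fin d) (Fin d) ℝ) :
    HasSum (fun n : ℕ => ((n.factorial : ℝ)⁻¹) • A ^ n) (NormedSpace.exp A) :=
  NormedSpace.exp_series_hasSum_exp' (𝕂 := ℝ) A
end

theorem pow_nonneg_aux {d : ℕ} (A : Matrix (Fin d) (Fin d) ℝ) (h : ∀ i j, 0 ≤ A i j) (n : ℕ) :
    ∀ i j, 0 ≤ (A ^ n) i j := by
  induction n with
  | zero =>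
    intro i j
    rw [pow_zero, Matrix.one_apply]
    split_ifs <;> norm_num
  | succ n ih =>
    intro i j
    rw [pow_succ, Matrix.mul_apply]
    exact Finset.sum_nonneg fun k _ => mul_nonneg (ih i k) (h k j)

theorem pow_pos_aux {d : ℕ} (A : Matrix (Fin d) (Fin d) ℝ) (h : ∀ i j, 0 ≤ A i j) {i j : Fin d}
    (hij : Relation.TransGen (fun i j => A i j = 1) i j) :
    ∃ n : ℕ, 0 < n ∧ 0 < (A ^ n) i j := by
  induction hij with
  | single hb => exact ⟨1, one_pos, by rw [pow_one, hb]; exact one_pos⟩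
  | @tail b c _ hbc ih =>
    obtain ⟨n, _, hp⟩ := ih
    refine ⟨n + 1, n.succ_pos, ?_⟩
    rw [pow_succ, Matrix.mul_apply]
    refine Finset.sum_pos' (fun k _ => mul_nonneg (pow_nonneg_aux A h n i k) (h k c))
      ⟨b, Finset.mem_univ _, ?_⟩
    rw [hbc, mul_one]
    exact hp

theorem trace_exp_gt_of_not_acyclic (d : ℕ) (A : Matrix (Fin d) (Fin d) ℝ)
    (hA : IsBinary A) (hcyc : ¬ IsAcyclicMat A) :
    (d : ℝ) < Matrix.trace (NormedSpace.exp A) := by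
  have h0 : ∀ i j, 0 ≤ A i j := fun i j => by
    rcases hA i j with h | h <;> rw [h]
    exact zero_le_one
  have hex : ∃ i, Relation.TransGen (fun i j => A i j = 1) i i := by
    by_contra hne
    exact hcyc (by
      first
        | exact fun i hi => hne ⟨i, hi⟩
        | exact ⟨fun i hi => hne ⟨i, hi⟩⟩)
  obtain ⟨i, hi⟩ := hex
  obtain ⟨n, hn, hp⟩ := pow_pos_aux A h0 hi
  have hs : HasSum (fun n : ℕ => Matrix.trace (((n.factorial : ℝ)⁻¹) • A ^ n))
      (Matrix.trace (NormedSpace.exp A)) :=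
    (hasSum_exp_mat_aux A).map (Matrix.traceAddMonoidHom (Fin d) ℝ)
      (continuous_id.matrix_trace)
  have hnn : ∀ m : ℕ, 0 ≤ Matrix.trace (((m.factorial : ℝ)⁻¹) • A ^ m) := fun m => by
    rw [Matrix.trace_smul, smul_eq_mul]
    exact mul_nonneg (by positivity) (Finset.sum_nonneg fun k _ => pow_nonneg_aux A h0 m k k)
  have hpos : 0 < Matrix.trace (((n.factorial : ℝ)⁻¹) • A ^ n) := by
    rw [Matrix.trace_smul, smul_eq_mul]
    exact mul_pos (by positivity) (Finset.sum_pos' (fun k _ => pow_nonneg_aux A h0 n k k)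
      ⟨i, Finset.mem_univ _, hp⟩)
  have hle := sum_le_hasSum {0, n} (fun m _ => hnn m) hs
  rw [Finset.sum_pair hn.ne] at hle
  have hz : Matrix.trace ((((0 : ℕ).factorial : ℝ)⁻¹) • A ^ 0) = (d : ℝ) := by simp
  linarith
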